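/- Suppose b > 1, q ∈ ℂ with 0 < |q| ≤ 1 - 1/b, and x ∈ ℂ with |x| > 1. Let κ be the least positive integer m for which |x q^m| < 1. Then the infinite product U := Π_{m=κ+1}^∞ (1 + x q^m) satisfies |U| ≥ e^{(π²/6)(1-b)}. -/

import Mathlib

/-!
Write `r = ‖q‖`. Since `‖x q ^ κ‖ ≤ 1`, the `n`-th factor of the product has norm at least
`1 - r ^ (n + 1)`, so it suffices to bound `∏ (1 - r ^ n)` from below. Expanding the logarithms and
summing over `n` first turns `-∑ log (1 - r ^ n)` into `∑ₛ (r ^ s / (1 - r ^ s)) / s`. As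
`1 - r ^ s = (1 - r) (1 + r + ⋯ + r ^ (s - 1)) ≥ (1 - r) s r ^ (s - 1)`, the `s`-th term is at most
`(r / (1 - r)) / s ^ 2`, and summing over `s` gives `(π ^ 2 / 6) (r / (1 - r))`, where
`r / (1 - r) ≤ b - 1`.
-/

section LambertTerm

variable {K : Type*} [Field K] [LinearOrder K] [IsStrictOrderedRing K] {r : K}

lemma succ_mul_pow_mul_one_sub_le (hr0 : 0 ≤ r) (hr1 : r ≤ 1) (s : ℕ) :
    (s + 1) * r ^ s * (1 - r) ≤ 1 - r ^ (s + 1) := by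
  have hsum : (s + 1) * r ^ s ≤ ∑ i ∈ Finset.range (s + 1), r ^ i := by
    simpa using Finset.card_nsmul_le_sum (Finset.range (s + 1)) (r ^ ·) (r ^ s) fun i hi ↦
      pow_le_pow_of_le_one hr0 hr1 (Finset.mem_range_succ_iff.mp hi)
  rw [← geom_sum_mul_neg r (s + 1)]
  exact mul_le_mul_of_nonneg_right hsum (sub_nonneg.mpr hr1)

lemma pow_succ_div_one_sub_pow_succ_le (hr0 : 0 ≤ r) (hr1 : r < 1) (s : ℕ) :
    r ^ (s + 1) / (1 - r ^ (s + 1)) ≤ r / (1 - r) / (s + 1) := by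
  have hpow : r ^ (s + 1) < 1 := pow_lt_one₀ hr0 hr1 s.succ_ne_zero
  rw [div_div, div_le_div_iff₀ (sub_pos.mpr hpow) (mul_pos (sub_pos.mpr hr1) (by positivity))]
  calc r ^ (s + 1) * ((1 - r) * (s + 1)) = r * ((s + 1) * r ^ s * (1 - r)) := by ring
    _ ≤ r * (1 - r ^ (s + 1)) := by
      gcongr
      exact succ_mul_pow_mul_one_sub_le hr0 hr1.le s

lemma sum_range_pow_succ_le (hr0 : 0 ≤ r) (hr1 : r < 1) (N : ℕ) :
    ∑ n ∈ Finset.range N, r ^ (n + 1) ≤ r / (1 - r) := by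
  simpa [Finset.sum_Ico_eq_sum_range, add_comm] using
    geom_sum_Ico_le_of_lt_one (m := 1) (n := N + 1) hr0 hr1

lemma sum_range_pow_succ_pow_succ_div_le (hr0 : 0 ≤ r) (hr1 : r < 1) (N s : ℕ) :
    ∑ n ∈ Finset.range N, (r ^ (n + 1)) ^ (s + 1) / ((s : K) + 1) ≤
      r / (1 - r) * (1 / ((s : K) + 1) ^ 2) := by
  calc ∑ n ∈ Finset.range N, (r ^ (n + 1)) ^ (s + 1) / ((s : K) + 1)
      = (∑ n ∈ Finset.range N, (r ^ (s + 1)) ^ (n + 1)) / (s + 1) := by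
        simp only [Finset.sum_div, pow_right_comm]
    _ ≤ r ^ (s + 1) / (1 - r ^ (s + 1)) / (s + 1) := by
        gcongr
        exact sum_range_pow_succ_le (pow_nonneg hr0 _) (pow_lt_one₀ hr0 hr1 s.succ_ne_zero) N
    _ ≤ r / (1 - r) / (s + 1) / (s + 1) := by
        exact div_le_div_of_nonneg_right (pow_succ_div_one_sub_pow_succ_le hr0 hr1 s)
          (by positivity)
    _ = r / (1 - r) * (1 / ((s : K) + 1) ^ 2) := by
        rw [div_div, mul_one_div, ← sq]

end LambertTerm

section EulerProduct

variable {r : ℝ}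

lemma sum_range_neg_log_one_sub_pow_succ_le (hr0 : 0 ≤ r) (hr1 : r < 1) (N : ℕ) :
    ∑ n ∈ Finset.range N, -Real.log (1 - r ^ (n + 1)) ≤ r / (1 - r) * (Real.pi ^ 2 / 6) := by
  have hlog : HasSum (fun s : ℕ ↦ ∑ n ∈ Finset.range N, (r ^ (n + 1)) ^ (s + 1) / ((s : ℝ) + 1))
      (∑ n ∈ Finset.range N, -Real.log (1 - r ^ (n + 1))) := by
    refine hasSum_sum fun n _ ↦ Real.hasSum_pow_div_log_of_abs_lt_one ?_
    rw [abs_of_nonneg (pow_nonneg hr0 _)]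
    exact pow_lt_one₀ hr0 hr1 n.succ_ne_zero
  have hzeta : HasSum (fun s : ℕ ↦ 1 / ((s : ℝ) + 1) ^ 2) (Real.pi ^ 2 / 6) := by
    simpa using (hasSum_nat_add_iff' 1).mpr hasSum_zeta_two
  exact hasSum_le (sum_range_pow_succ_pow_succ_div_le hr0 hr1 N) hlog (hzeta.mul_left _)

lemma exp_le_prod_range_one_sub_pow_succ (hr0 : 0 ≤ r) (hr1 : r < 1) (N : ℕ) :
    Real.exp (-(r / (1 - r) * (Real.pi ^ 2 / 6))) ≤ ∏ n ∈ Finset.range N, (1 - r ^ (n + 1)) := by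
  have hpos (n : ℕ) : 0 < 1 - r ^ (n + 1) := sub_pos.mpr (pow_lt_one₀ hr0 hr1 n.succ_ne_zero)
  rw [← Real.le_log_iff_exp_le (Finset.prod_pos fun n _ ↦ hpos n),
    Real.log_prod fun n _ ↦ (hpos n).ne', neg_le, ← Finset.sum_neg_distrib]
  exact sum_range_neg_log_one_sub_pow_succ_le hr0 hr1 N

end EulerProduct

section SeminormedRing

variable {R : Type*} [SeminormedRing R] [NormOneClass R] {q z : R}

lemma norm_mul_pow_le_pow_norm (hz : ‖z‖ ≤ 1) (n : ℕ) : ‖z * q ^ n‖ ≤ ‖q‖ ^ n :=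
  calc ‖z * q ^ n‖ ≤ ‖z‖ * ‖q ^ n‖ := norm_mul_le _ _
    _ ≤ ‖q ^ n‖ := mul_le_of_le_one_left (norm_nonneg _) hz
    _ ≤ ‖q‖ ^ n := norm_pow_le q n

lemma one_sub_pow_norm_le_norm_one_add_mul_pow (hz : ‖z‖ ≤ 1) (n : ℕ) :
    1 - ‖q‖ ^ n ≤ ‖1 + z * q ^ n‖ := by
  calc 1 - ‖q‖ ^ n ≤ ‖(1 : R)‖ - ‖z * q ^ n‖ := by
        rw [norm_one]
        exact sub_le_sub_left (norm_mul_pow_le_pow_norm hz n) 1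
    _ ≤ ‖1 + z * q ^ n‖ := norm_sub_le_norm_add _ _

end SeminormedRing

section NormedCommRing

variable {R : Type*} [NormedCommRing R] [NormOneClass R] [CompleteSpace R] {q z : R}

lemma multipliable_one_add_mul_pow_succ (hq : ‖q‖ < 1) (hz : ‖z‖ ≤ 1) :
    Multipliable fun n : ℕ ↦ 1 + z * q ^ (n + 1) :=
  multipliable_one_add_of_summable <|
    .of_nonneg_of_le (fun _ ↦ norm_nonneg _) (fun n ↦ norm_mul_pow_le_pow_norm hz (n + 1)) <|
      (summable_nat_add_iff 1).mpr (summable_geometric_of_lt_one (norm_nonneg q) hq)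

variable [NormMulClass R]

lemma exp_le_norm_tprod_one_add_mul_pow_succ (hq : ‖q‖ < 1) (hz : ‖z‖ ≤ 1) :
    Real.exp (-(‖q‖ / (1 - ‖q‖) * (Real.pi ^ 2 / 6))) ≤ ‖∏' n : ℕ, (1 + z * q ^ (n + 1))‖ := by
  refine ge_of_tendsto'
    (multipliable_one_add_mul_pow_succ hq hz).hasProd.tendsto_prod_nat.norm fun N ↦ ?_
  calc Real.exp (-(‖q‖ / (1 - ‖q‖) * (Real.pi ^ 2 / 6)))
      ≤ ∏ n ∈ Finset.range N, (1 - ‖q‖ ^ (n + 1)) :=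
        exp_le_prod_range_one_sub_pow_succ (norm_nonneg q) hq N
    _ ≤ ∏ n ∈ Finset.range N, ‖1 + z * q ^ (n + 1)‖ :=
        Finset.prod_le_prod
          (fun n _ ↦ sub_nonneg.mpr (pow_le_one₀ (norm_nonneg q) hq.le))
          fun n _ ↦ one_sub_pow_norm_le_norm_one_add_mul_pow hz (n + 1)
    _ = ‖∏ n ∈ Finset.range N, (1 + z * q ^ (n + 1))‖ := (norm_prod _ _).symm

theorem U_tail_lower_bound_general {b : ℝ} (hb : 0 < b) (hq : ‖q‖ ≤ 1 - 1 / b) {x : R} {κ : ℕ}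
    (hκ : ‖x * q ^ κ‖ ≤ 1) :
    Real.exp ((Real.pi ^ 2 / 6) * (1 - b)) ≤ ‖∏' m : ℕ, (1 + x * q ^ (κ + 1 + m))‖ := by
  have hq1 : ‖q‖ < 1 := hq.trans_lt (sub_lt_self 1 (one_div_pos.mpr hb))
  have hqb : ‖q‖ / (1 - ‖q‖) ≤ b - 1 := by
    have hinv : 1 ≤ b * (1 - ‖q‖) := (div_le_iff₀' hb).mp (le_sub_comm.mp hq)
    rw [div_le_iff₀ (sub_pos.mpr hq1)]
    linarith
  have hfactor (m : ℕ) : x * q ^ (κ + 1 + m) = x * q ^ κ * q ^ (m + 1) := by ring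
  simp only [hfactor]
  calc Real.exp (Real.pi ^ 2 / 6 * (1 - b)) = Real.exp (-((b - 1) * (Real.pi ^ 2 / 6))) := by
        ring_nf
    _ ≤ Real.exp (-(‖q‖ / (1 - ‖q‖) * (Real.pi ^ 2 / 6))) := by gcongr
    _ ≤ ‖∏' m : ℕ, (1 + x * q ^ κ * q ^ (m + 1))‖ :=
        exp_le_norm_tprod_one_add_mul_pow_succ hq1 hκ

end NormedCommRing

/-- For `b > 1`, `0 < |q| ≤ 1 - 1/b`, `|x| > 1` and `κ` the least positive integer with
`|x q^κ| < 1`, the product `∏_{m=κ+1}^∞ (1 + x q^m)` satisfies `|·| ≥ e^{(π²/6)(1-b)}`. -/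
theorem U_tail_lower_bound (b : ℝ) (hb : 1 < b) (q : ℂ) (hq0 : 0 < ‖q‖) (hq : ‖q‖ ≤ 1 - 1 / b)
    (x : ℂ) (hx : 1 < ‖x‖) (κ : ℕ)
    (hκ : IsLeast {m : ℕ | 1 ≤ m ∧ ‖x * q ^ m‖ < 1} κ) :
    Real.exp ((Real.pi ^ 2 / 6) * (1 - b)) ≤ ‖∏' m : ℕ, (1 + x * q ^ (κ + 1 + m))‖ :=
  U_tail_lower_bound_general (zero_lt_one.trans hb) hq hκ.1.2.le
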